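/- There is an absolute constant c₂ > 0 such that for every d ∈ ℕ, every nonempty finite set T ⊂ ℝ^d, and G a standard gaussian random vector in ℝ^d (i.e., with independent standard normal coordinates), E sup_{t∈T} ⟨G,t⟩ ≤ c₂ · γ₂(T), where γ₂(T) is the generic chaining functional of T with respect to the Euclidean metric. -/

import Mathlib

/-!
Generic chaining, with the union bound packed into a single random variable.

Fix an admissible sequence `(T_s)` and write `X_t = ⟨G, t⟩`. For `u ∈ T_{s+1}`, `v ∈ T_s` let `Y` be
`(X_u - X_v) / ‖u - v‖`, a standard normal variable (or `0`), and let `a = 4 · 2^{s/2}`. From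
`z ≤ exp z` one gets `Y ≤ 2^{s/2} · (4 + exp (a (Y - a)) / (4 · 2^s))`. Summing the exponential terms
over all pairs and all levels `s < N` gives one variable `W ≥ 0` (`chainW`) such that
`X_u - X_v ≤ 2^{s/2} ‖u - v‖ W` simultaneously for all these pairs (`increment_le`). Since
`E exp (a (Y - a)) ≤ exp (- 8 · 2^s)` and there are at most `8 ^ (2 ^ s)` pairs on level `s`, each
level contributes at most `1 / (4 · 2^s)`, so `E W ≤ 5` (`integral_chainW_le`).

Let `π_s t` be a nearest point to `t` in `T_s`. As `T` is finite and the chaining sums converge,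
`π_N t = t` for all `t ∈ T` once `N` is large. Telescoping along `π_0 t, …, π_N t` yields
`X_t ≤ X_{t₀} + 2 g W`, where `T_0 = {t₀}` and `g` bounds the chaining sums, and integrating gives
`E sup_t X_t ≤ 10 g`.
-/

open MeasureTheory ProbabilityTheory

/-- The standard gaussian measure on `ℝ^d` (independent standard normal coordinates). -/
noncomputable def stdGaussian (d : ℕ) : Measure (Fin d → ℝ) :=
  Measure.pi fun _ : Fin d => gaussianReal 0 1

/-- The Euclidean distance on `ℝ^d`. -/
noncomputable def eucDist {d : ℕ} (x y : Fin d → ℝ) : ℝ :=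
  Real.sqrt (∑ i, (x i - y i) ^ 2)

/-- An admissible sequence of a set `T`: subsets `Ts s ⊆ T` with `|Ts 0| = 1` and
`|Ts s| ≤ 2^(2^s)`, each nonempty and finite. -/
def Admissible {α : Type*} (T : Set α) (Ts : ℕ → Set α) : Prop :=
  (Ts 0).ncard = 1 ∧ ∀ s, Ts s ⊆ T ∧ (Ts s).Nonempty ∧ (Ts s).Finite ∧ (Ts s).ncard ≤ 2 ^ (2 ^ s)

/-- Talagrand's generic chaining functional `γ₂(T)` of `T ⊆ ℝ^d` with respect to the Euclidean
metric: the infimum over admissible sequences of `sup_{t∈T} Σ_s 2^{s/2} · dist₂(t, Ts s)`. -/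
noncomputable def gammaTwo {d : ℕ} (T : Set (Fin d → ℝ)) : ℝ :=
  sInf {g : ℝ | ∃ Ts : ℕ → Set (Fin d → ℝ), Admissible T Ts ∧
    ∀ t ∈ T, ∃ a : ℝ,
      HasSum (fun s : ℕ => 2 ^ ((s : ℝ) / 2) * sInf (eucDist t '' Ts s)) a ∧ a ≤ g}

/-! ### The Euclidean distance -/

lemma eucDist_eq_dist {d : ℕ} (x y : Fin d → ℝ) :
    eucDist x y = dist (WithLp.toLp 2 x) (WithLp.toLp 2 y) := by
  simp [eucDist, EuclideanSpace.dist_eq, Real.dist_eq, sq_abs]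

lemma eucDist_nonneg {d : ℕ} (x y : Fin d → ℝ) : 0 ≤ eucDist x y := Real.sqrt_nonneg _

lemma eucDist_triangle {d : ℕ} (x y z : Fin d → ℝ) :
    eucDist x z ≤ eucDist y x + eucDist y z := by
  simp only [eucDist_eq_dist]
  exact dist_triangle_left _ _ _

lemma eq_of_eucDist_eq_zero {d : ℕ} {x y : Fin d → ℝ} (h : eucDist x y = 0) : x = y := by
  rw [eucDist_eq_dist] at h
  simpa using h

/-! ### Moments of the standard gaussian measure -/

instance stdGaussian_isProbabilityMeasure (d : ℕ) : IsProbabilityMeasure (stdGaussian d) := by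
  unfold _root_.stdGaussian; infer_instance

lemma integrable_exp_dot {d : ℕ} (w : Fin d → ℝ) :
    Integrable (fun x : Fin d → ℝ => Real.exp (∑ i, x i * w i)) (stdGaussian d) := by
  simp only [Real.exp_sum]
  refine Integrable.fintype_prod (f := fun i y => Real.exp (y * w i)) fun i => ?_
  simpa [mul_comm] using integrable_exp_mul_gaussianReal (μ := 0) (v := 1) (w i)

lemma integral_exp_dot {d : ℕ} (w : Fin d → ℝ) :
    ∫ x, Real.exp (∑ i, x i * w i) ∂(stdGaussian d) = Real.exp ((∑ i, w i ^ 2) / 2) := by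
  simp only [Real.exp_sum, _root_.stdGaussian]
  rw [integral_fintype_prod_eq_prod (fun i y => Real.exp (y * w i)), Finset.sum_div, Real.exp_sum]
  refine Finset.prod_congr rfl fun i _ => ?_
  have h := congrFun (mgf_id_gaussianReal (μ := 0) (v := 1)) (w i)
  simp only [mgf, id] at h
  simpa [mul_comm] using h

lemma integrable_coord_mul {d : ℕ} (t : Fin d → ℝ) (i : Fin d) :
    Integrable (fun x : Fin d → ℝ => x i * t i) (stdGaussian d) := by
  refine Integrable.mul_const ?_ _
  have h : Integrable (id : ℝ → ℝ) (gaussianReal 0 1) :=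
    (memLp_id_gaussianReal 1).integrable (by simp)
  exact (measurePreserving_eval (fun _ : Fin d => gaussianReal 0 1) i).integrable_comp_of_integrable h

lemma integrable_dot {d : ℕ} (t : Fin d → ℝ) :
    Integrable (fun x : Fin d → ℝ => ∑ i, x i * t i) (stdGaussian d) :=
  integrable_finsetSum _ fun i _ => integrable_coord_mul t i

lemma integral_dot {d : ℕ} (t : Fin d → ℝ) :
    ∫ x, ∑ i, x i * t i ∂(stdGaussian d) = 0 := by
  rw [integral_finsetSum _ fun i _ => integrable_coord_mul t i]
  refine Finset.sum_eq_zero fun i _ => ?_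
  rw [integral_mul_const]
  have h := integral_comp_eval (μ := fun _ : Fin d => gaussianReal 0 1) (i := i)
    (f := (id : ℝ → ℝ)) aestronglyMeasurable_id
  simp only [id, integral_id_gaussianReal] at h
  simp [_root_.stdGaussian, h]

/-! ### The dominating variable -/

/-- The chaining weight `2^{s/2}`. -/
noncomputable def lvl (s : ℕ) : ℝ := 2 ^ ((s : ℝ) / 2)

lemma lvl_pos (s : ℕ) : 0 < lvl s := Real.rpow_pos_of_pos two_pos _

lemma lvl_sq (s : ℕ) : lvl s ^ 2 = 2 ^ s := by
  rw [lvl, ← Real.rpow_natCast, ← Real.rpow_mul two_pos.le, ← Real.rpow_natCast]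
  congr 1
  push_cast
  ring

lemma lvl_le_succ (s : ℕ) : lvl s ≤ lvl (s + 1) := by
  apply Real.rpow_le_rpow_of_exponent_le one_le_two
  push_cast
  linarith

/-- The direction `(u - v) / ‖u - v‖`, which is `0` when `u = v`. -/
noncomputable def dir {d : ℕ} (u v : Fin d → ℝ) : Fin d → ℝ :=
  fun i => (eucDist u v)⁻¹ * (u i - v i)

lemma dir_sq_le {d : ℕ} (u v : Fin d → ℝ) : ∑ i, dir u v i ^ 2 ≤ 1 := by
  have h : eucDist u v ^ 2 = ∑ i, (u i - v i) ^ 2 :=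
    Real.sq_sqrt (Finset.sum_nonneg fun i _ => sq_nonneg _)
  simp only [dir, mul_pow, ← Finset.mul_sum, ← h]
  by_cases h0 : eucDist u v = 0
  · simp [h0]
  · rw [← mul_pow, inv_mul_cancel₀ h0, one_pow]

lemma dot_sub_eq {d : ℕ} (x u v : Fin d → ℝ) :
    ∑ i, x i * u i - ∑ i, x i * v i = eucDist u v * ∑ i, x i * dir u v i := by
  by_cases h0 : eucDist u v = 0
  · rw [h0, eq_of_eucDist_eq_zero h0]; simp
  · rw [← Finset.sum_sub_distrib, Finset.mul_sum]
    refine Finset.sum_congr rfl fun i _ => ?_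
    simp only [dir]
    field_simp

/-- The exponential penalty `exp (a (Y - a))` with `a = 4 · 2^{s/2}`, for the normalized increment
`Y = (X_u - X_v) / ‖u - v‖`. -/
noncomputable def penalty {d : ℕ} (s : ℕ) (p : (Fin d → ℝ) × (Fin d → ℝ)) (x : Fin d → ℝ) : ℝ :=
  Real.exp (4 * lvl s * (∑ i, x i * dir p.1 p.2 i - 4 * lvl s))

lemma penalty_eq {d : ℕ} (s : ℕ) (p : (Fin d → ℝ) × (Fin d → ℝ)) (x : Fin d → ℝ) :
    penalty s p x
      = Real.exp (∑ i, x i * (4 * lvl s * dir p.1 p.2 i)) * Real.exp (-(16 * 2 ^ s)) := by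
  rw [penalty, ← Real.exp_add, ← lvl_sq]
  congr 1
  rw [mul_sub, Finset.mul_sum]
  have : ∑ i, 4 * lvl s * (x i * dir p.1 p.2 i) = ∑ i, x i * (4 * lvl s * dir p.1 p.2 i) :=
    Finset.sum_congr rfl fun i _ => by ring
  rw [this]
  ring

lemma integrable_penalty {d : ℕ} (s : ℕ) (p : (Fin d → ℝ) × (Fin d → ℝ)) :
    Integrable (penalty s p) (stdGaussian d) := by
  have h := (integrable_exp_dot (fun i => 4 * lvl s * dir p.1 p.2 i)).mul_const
    (Real.exp (-(16 * 2 ^ s)))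
  exact h.congr (.of_forall fun x => (penalty_eq s p x).symm)

lemma integral_penalty_le {d : ℕ} (s : ℕ) (p : (Fin d → ℝ) × (Fin d → ℝ)) :
    ∫ x, penalty s p x ∂(stdGaussian d) ≤ Real.exp (-(8 * 2 ^ s)) := by
  simp only [penalty_eq]
  rw [integral_mul_const, integral_exp_dot, ← Real.exp_add, Real.exp_le_exp]
  simp only [mul_pow, ← Finset.mul_sum, lvl_sq]
  have h := mul_le_mul_of_nonneg_left (dir_sq_le p.1 p.2) (pow_nonneg two_pos.le s : (0:ℝ) ≤ 2 ^ s)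
  linarith

/-- The variable `W` dominating, up to the factor `2^{s/2} ‖u - v‖`, every increment `X_u - X_v`
between consecutive levels `F (s + 1)` and `F s` with `s < N`. -/
noncomputable def chainW {d : ℕ} (F : ℕ → Finset (Fin d → ℝ)) (N : ℕ) (x : Fin d → ℝ) : ℝ :=
  4 + ∑ s ∈ Finset.range N, ∑ p ∈ F (s + 1) ×ˢ F s, penalty s p x / (4 * 2 ^ s)

lemma chainW_nonneg {d : ℕ} (F : ℕ → Finset (Fin d → ℝ)) (N : ℕ) (x : Fin d → ℝ) :
    0 ≤ chainW F N x := by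
  unfold chainW penalty
  positivity

lemma increment_le {d : ℕ} (F : ℕ → Finset (Fin d → ℝ)) {N s : ℕ} (hs : s < N)
    {u v : Fin d → ℝ} (hu : u ∈ F (s + 1)) (hv : v ∈ F s) (x : Fin d → ℝ) :
    ∑ i, x i * u i - ∑ i, x i * v i ≤ lvl s * eucDist u v * chainW F N x := by
  have hr := lvl_pos s
  have h1 : 4 + penalty s (u, v) x / (4 * 2 ^ s) ≤ chainW F N x := by
    unfold chainW
    gcongr
    have hpen : ∀ s p, 0 ≤ penalty s p x / (4 * 2 ^ s) := fun s p => by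
      unfold penalty; positivity
    calc penalty s (u, v) x / (4 * 2 ^ s)
        ≤ ∑ p ∈ F (s + 1) ×ˢ F s, penalty s p x / (4 * 2 ^ s) :=
          Finset.single_le_sum (f := fun p => penalty s p x / (4 * 2 ^ s))
            (fun p _ => hpen s p) (Finset.mk_mem_product hu hv)
      _ ≤ _ := Finset.single_le_sum
            (f := fun s => ∑ p ∈ F (s + 1) ×ˢ F s, penalty s p x / (4 * 2 ^ s))
            (fun s _ => Finset.sum_nonneg fun p _ => hpen s p) (Finset.mem_range.2 hs)
  have h2 : ∑ i, x i * dir u v i ≤ lvl s * (4 + penalty s (u, v) x / (4 * 2 ^ s)) := by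
    have he := Real.add_one_le_exp (4 * lvl s * (∑ i, x i * dir u v i - 4 * lvl s))
    rw [← lvl_sq]
    have : lvl s * (4 + penalty s (u, v) x / (4 * lvl s ^ 2))
        = 4 * lvl s + penalty s (u, v) x / (4 * lvl s) := by
      field_simp
    rw [this, ← sub_le_iff_le_add', le_div_iff₀ (by positivity)]
    unfold penalty
    simp only
    linarith
  rw [dot_sub_eq]
  calc eucDist u v * ∑ i, x i * dir u v i
      ≤ eucDist u v * (lvl s * chainW F N x) := by
        refine mul_le_mul_of_nonneg_left (h2.trans ?_) (eucDist_nonneg u v)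
        exact mul_le_mul_of_nonneg_left h1 hr.le
    _ = _ := by ring

lemma integrable_chainW {d : ℕ} (F : ℕ → Finset (Fin d → ℝ)) (N : ℕ) :
    Integrable (chainW F N) (stdGaussian d) :=
  (integrable_const _).add <| integrable_finsetSum _ fun s _ =>
    integrable_finsetSum _ fun p _ => (integrable_penalty s p).div_const _

lemma integral_chainW_le {d : ℕ} (F : ℕ → Finset (Fin d → ℝ)) (N : ℕ)
    (hF : ∀ s, (F s).card ≤ 2 ^ (2 ^ s)) :
    ∫ x, chainW F N x ∂(stdGaussian d) ≤ 5 := by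
  have hint : ∀ s, Integrable (fun x => ∑ p ∈ F (s + 1) ×ˢ F s, penalty s p x / (4 * 2 ^ s))
      (stdGaussian d) := fun s =>
    integrable_finsetSum _ fun p _ => (integrable_penalty s p).div_const _
  unfold chainW
  rw [integral_add (integrable_const _) (integrable_finsetSum _ fun s _ => hint s),
    integral_finsetSum _ fun s _ => hint s]
  have hlevel : ∀ s, ∫ x, ∑ p ∈ F (s + 1) ×ˢ F s, penalty s p x / (4 * 2 ^ s) ∂(stdGaussian d)
      ≤ (1 / 4) * (1 / 2) ^ s := by
    intro s
    rw [integral_finsetSum _ fun p _ => (integrable_penalty s p).div_const _]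
    simp only [integral_div]
    rw [← Finset.sum_div]
    have hcard : ((F (s + 1) ×ˢ F s).card : ℝ) ≤ 8 ^ (2 ^ s) := by
      have : (F (s + 1) ×ˢ F s).card ≤ 8 ^ (2 ^ s) := by
        rw [Finset.card_product]
        refine (Nat.mul_le_mul (hF _) (hF _)).trans_eq ?_
        rw [← pow_add, show 8 = 2 ^ 3 by norm_num, ← pow_mul]
        congr 1
        ring
      exact_mod_cast this
    have hsum : ∑ p ∈ F (s + 1) ×ˢ F s, ∫ x, penalty s p x ∂(stdGaussian d) ≤ 1 := by
      calc _ ≤ ∑ p ∈ F (s + 1) ×ˢ F s, Real.exp (-(8 * 2 ^ s)) :=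
            Finset.sum_le_sum fun p _ => integral_penalty_le s p
        _ = (F (s + 1) ×ˢ F s).card * Real.exp (-(8 * 2 ^ s)) := by simp
        _ ≤ Real.exp 8 ^ (2 ^ s) * Real.exp (-(8 * 2 ^ s)) := by
            gcongr
            refine hcard.trans ?_
            gcongr
            linarith [Real.add_one_le_exp 8]
        _ = 1 := by
            rw [← Real.exp_nat_mul, ← Real.exp_add]
            push_cast
            rw [show (2:ℝ) ^ s * 8 + -(8 * 2 ^ s) = 0 by ring, Real.exp_zero]
    calc _ ≤ 1 / (4 * (2:ℝ) ^ s) := by gcongr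
      _ = _ := by rw [one_div_pow]; field_simp
  have h := Finset.sum_le_sum fun s (_ : s ∈ Finset.range N) => hlevel s
  rw [← Finset.mul_sum] at h
  have hg := sum_geometric_two_le N
  simp only [integral_const, probReal_univ, smul_eq_mul]
  linarith

/-! ### Chaining -/

/-- The set over which `gammaTwo` is an infimum is nonempty for finite `T`: take `T_s = {t₀}` for
`s ≤ |T|` and `T_s = T` afterwards; the chaining sums then have finitely many nonzero terms. -/
lemma exists_admissible {d : ℕ} {T : Set (Fin d → ℝ)} (hT : T.Finite) (hne : T.Nonempty) :
    ∃ g : ℝ, ∃ Ts : ℕ → Set (Fin d → ℝ), Admissible T Ts ∧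
    ∀ t ∈ T, ∃ a : ℝ,
      HasSum (fun s : ℕ => 2 ^ ((s : ℝ) / 2) * sInf (eucDist t '' Ts s)) a ∧ a ≤ g := by
  obtain ⟨t₀, ht₀⟩ := hne
  set M := T.ncard + 1 with hM
  set Ts : ℕ → Set (Fin d → ℝ) := fun s => if s < M then {t₀} else T with hTs
  have hzero : ∀ t ∈ T, ∀ s ∉ Finset.range M,
      2 ^ ((s : ℝ) / 2) * sInf (eucDist t '' Ts s) = 0 := by
    intro t ht s hs
    have hs' : ¬ s < M := by simpa using hs
    have hle : sInf (eucDist t '' Ts s) ≤ 0 := by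
      refine csInf_le ⟨0, ?_⟩ ⟨t, by simpa [hTs, hs'] using ht, by simp [eucDist]⟩
      rintro _ ⟨y, _, rfl⟩
      exact eucDist_nonneg _ _
    have hge : 0 ≤ sInf (eucDist t '' Ts s) := by
      refine Real.sInf_nonneg ?_
      rintro _ ⟨y, _, rfl⟩
      exact eucDist_nonneg _ _
    rw [le_antisymm hle hge, mul_zero]
  obtain ⟨g, hg⟩ := (hT.image fun t =>
    ∑ s ∈ Finset.range M, (2:ℝ) ^ ((s : ℝ) / 2) * sInf (eucDist t '' Ts s)).bddAbove
  refine ⟨g, Ts, ⟨by simp [hTs, hM], fun s => ?_⟩, fun t ht =>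
    ⟨_, hasSum_sum_of_ne_finset_zero (hzero t ht), hg ⟨t, ht, rfl⟩⟩⟩
  by_cases hs : s < M
  · simp [hTs, hs, ht₀, Nat.one_le_two_pow]
  · simp only [hTs, hs, if_false]
    refine ⟨subset_rfl, ⟨t₀, ht₀⟩, hT, ?_⟩
    have h1 : T.ncard ≤ s := by omega
    exact h1.trans ((Nat.lt_two_pow_self).le.trans (Nat.lt_two_pow_self).le)

/-- The bound `E sup X_t ≤ 10 g` for every value `g` admitted in the infimum defining `γ₂`. -/
lemma integral_sup_le {d : ℕ} {T : Set (Fin d → ℝ)} (hT : T.Finite) (hne : T.Nonempty) {g : ℝ}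
    {Ts : ℕ → Set (Fin d → ℝ)} (hadm : Admissible T Ts)
    (hg : ∀ t ∈ T, ∃ a : ℝ,
      HasSum (fun s : ℕ => 2 ^ ((s : ℝ) / 2) * sInf (eucDist t '' Ts s)) a ∧ a ≤ g) :
    ∫ x, sSup ((fun t => ∑ i, x i * t i) '' T) ∂(stdGaussian d) ≤ 10 * g := by
  obtain ⟨h0, hadm⟩ := hadm
  obtain ⟨t₀, ht₀⟩ := Set.ncard_eq_one.1 h0
  -- `π s t` is a nearest point to `t` in `T_s`.
  have hnear : ∀ s t, ∃ y ∈ Ts s, eucDist t y = sInf (eucDist t '' Ts s) := fun s t =>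
    ((hadm s).2.1.image _).csInf_mem ((hadm s).2.2.1.image _)
  choose π hπ hπd using hnear
  have hterm : ∀ t s, 0 ≤ lvl s * eucDist t (π s t) := fun t s =>
    mul_nonneg (lvl_pos s).le (eucDist_nonneg _ _)
  have hg' : ∀ t ∈ T, Summable (fun s => lvl s * eucDist t (π s t)) ∧
      ∑' s, lvl s * eucDist t (π s t) ≤ g := by
    intro t ht
    obtain ⟨a, ha, hag⟩ := hg t ht
    have : HasSum (fun s => lvl s * eucDist t (π s t)) a := by simpa only [hπd, lvl] using ha
    exact ⟨this.summable, this.tsum_eq.trans_le hag⟩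
  have hg0 : 0 ≤ g := by
    obtain ⟨t, ht⟩ := hne
    exact (tsum_nonneg (hterm t)).trans (hg' t ht).2
  -- Distances within the finite set `T` are bounded below, so the chains reach their targets.
  have hev : ∀ t ∈ T, ∀ᶠ s in Filter.atTop, π s t = t := by
    intro t ht
    have hlim : Filter.Tendsto (fun s => eucDist t (π s t)) Filter.atTop (nhds 0) := by
      refine squeeze_zero (fun s => eucDist_nonneg _ _) (fun s => ?_)
        (hg' t ht).1.tendsto_atTop_zero
      have h1 : 1 ≤ lvl s := Real.one_le_rpow one_le_two (by positivity)
      exact le_mul_of_one_le_left (eucDist_nonneg _ _) h1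
    have hfin : ∀ y ∈ T, ∀ᶠ s in Filter.atTop, y ≠ t → π s t ≠ y := by
      intro y _
      by_cases hy : y = t
      · simp [hy]
      · have hpos : 0 < eucDist t y := (eucDist_nonneg t y).lt_of_ne
          fun h => hy (eq_of_eucDist_eq_zero h.symm).symm
        filter_upwards [hlim.eventually_lt_const hpos] with s hs _ heq
        rw [heq] at hs
        exact lt_irrefl _ hs
    filter_upwards [(Filter.eventually_all_finite hT).2 hfin] with s hs
    by_contra hcon
    exact hs _ ((hadm s).1 (hπ s t)) hcon rfl
  obtain ⟨N, hN⟩ := ((Filter.eventually_all_finite hT).2 hev).exists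
  set F : ℕ → Finset (Fin d → ℝ) := fun s => (hadm s).2.2.1.toFinset with hF
  have hFmem : ∀ s t, π s t ∈ F s := fun s t => by simpa [hF] using hπ s t
  have hFcard : ∀ s, (F s).card ≤ 2 ^ (2 ^ s) := fun s => by
    exact (Set.ncard_eq_toFinset_card _ (hadm s).2.2.1).symm.trans_le (hadm s).2.2.2
  have hpt : ∀ x : Fin d → ℝ, ∀ t ∈ T,
      ∑ i, x i * t i ≤ ∑ i, x i * t₀ i + 2 * g * chainW F N x := by
    intro x t ht
    have hW := chainW_nonneg F N x
    have hπ0 : π 0 t = t₀ := by simpa [ht₀] using hπ 0 t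
    have htel := Finset.sum_range_sub (fun s => ∑ i, x i * π s t i) N
    rw [hN t ht, hπ0] at htel
    have hpart : ∀ n, ∑ s ∈ Finset.range n, lvl s * eucDist t (π s t) ≤ g := fun n =>
      ((hg' t ht).1.sum_le_tsum _ fun s _ => hterm t s).trans (hg' t ht).2
    have hsucc : ∑ s ∈ Finset.range N, lvl (s + 1) * eucDist t (π (s + 1) t) ≤ g := by
      have h := hpart (N + 1)
      rw [Finset.sum_range_succ'] at h
      linarith [hterm t 0]
    have hlink : ∀ s, lvl s * eucDist (π (s + 1) t) (π s t)
        ≤ lvl (s + 1) * eucDist t (π (s + 1) t) + lvl s * eucDist t (π s t) := by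
      intro s
      have h1 := mul_le_mul_of_nonneg_left (eucDist_triangle (π (s + 1) t) t (π s t))
        (lvl_pos s).le
      have h2 := mul_le_mul_of_nonneg_right (lvl_le_succ s) (eucDist_nonneg t (π (s + 1) t))
      linarith
    have hchain : ∑ s ∈ Finset.range N, lvl s * eucDist (π (s + 1) t) (π s t) ≤ 2 * g := by
      refine (Finset.sum_le_sum fun s _ => hlink s).trans ?_
      rw [Finset.sum_add_distrib]
      linarith [hpart N]
    have hbound : ∑ i, x i * t i - ∑ i, x i * t₀ i
        ≤ (∑ s ∈ Finset.range N, lvl s * eucDist (π (s + 1) t) (π s t)) * chainW F N x := by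
      rw [← htel, Finset.sum_mul]
      exact Finset.sum_le_sum fun s hs =>
        increment_le F (Finset.mem_range.1 hs) (hFmem _ _) (hFmem _ _) x
    linarith [mul_le_mul_of_nonneg_right hchain hW]
  by_cases hI : Integrable (fun x => sSup ((fun t => ∑ i, x i * t i) '' T)) (stdGaussian d)
  · have hIW := (integrable_chainW F N).const_mul (2 * g)
    calc _ ≤ ∫ x, (∑ i, x i * t₀ i + 2 * g * chainW F N x) ∂(stdGaussian d) := by
          refine integral_mono hI ((integrable_dot t₀).add hIW) fun x => ?_
          refine csSup_le (hne.image _) ?_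
          rintro _ ⟨t, ht, rfl⟩
          exact hpt x t ht
      _ = 2 * g * ∫ x, chainW F N x ∂(stdGaussian d) := by
          rw [integral_add (integrable_dot t₀) hIW, integral_dot, integral_const_mul, zero_add]
      _ ≤ 2 * g * 5 := by
          gcongr
          exact integral_chainW_le F N hFcard
      _ = 10 * g := by ring
  -- The supremum is in fact integrable, but the junk value `0` satisfies the bound as well.
  · rw [integral_undef hI]
    linarith

/-- generic chaining upper bound for gaussian processes,
`E sup_{t∈T} ⟨G,t⟩ ≤ c₂ γ₂(T)`. -/
theorem gaussian_sup_le_gammaTwo :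
    ∃ c₂ : ℝ, 0 < c₂ ∧
      ∀ (d : ℕ) (T : Set (Fin d → ℝ)), T.Finite → T.Nonempty →
        ∫ x, sSup ((fun t => ∑ i, x i * t i) '' T) ∂(stdGaussian d) ≤ c₂ * gammaTwo T := by
  refine ⟨10, by norm_num, fun d T hT hne => ?_⟩
  rw [← div_le_iff₀' (by norm_num)]
  refine le_csInf (exists_admissible hT hne) ?_
  rintro g ⟨Ts, hadm, hg⟩
  rw [div_le_iff₀' (by norm_num)]
  exact integral_sup_le hT hne hadm hg
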